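/- Let X be an undirected graph and let f : Y → X be a covering such that Y has no loops (no half-arc u with s(u) = t(u)). Then for every integer p > 1 and every backtrack-free p-cycle h : c^p_U → Y, there exist a covering g : U → X, a morphism u : U → Y with f ∘ u = g, and an injective morphism c : c^p_U → U through which U is a p-cycle with an attached forest, such that u ∘ c = h. -/

import Mathlib

open CategoryTheory

namespace Paper

/-- An undirected graph: a set of nodes, a set of half-arcs, source and target maps
and an involution `i` on half-arcs with `s ∘ i = t`. -/
structure UGraph : Type 1 where
  nodes : Type
  half : Type
  s : half → nodes
  t : half → nodes
  inv : half → half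
  inv_inv : ∀ a, inv (inv a) = a
  s_inv : ∀ a, s (inv a) = t a

/-- A morphism of undirected graphs: maps on nodes and half-arcs commuting with
source, target and the involution. -/
@[ext]
structure UGraph.Hom (X Y : UGraph) where
  f0 : X.nodes → Y.nodes
  f1 : X.half → Y.half
  comm_s : ∀ a, Y.s (f1 a) = f0 (X.s a)
  comm_t : ∀ a, Y.t (f1 a) = f0 (X.t a)
  comm_inv : ∀ a, Y.inv (f1 a) = f1 (X.inv a)

/-- The category of undirected graphs. -/
instance : Category UGraph where
  Hom := UGraph.Hom
  id X := ⟨id, id, fun _ => rfl, fun _ => rfl, fun _ => rfl⟩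
  comp f g := ⟨g.f0 ∘ f.f0, g.f1 ∘ f.f1,
    fun a => by simp [Function.comp, g.comm_s, f.comm_s],
    fun a => by simp [Function.comp, g.comm_t, f.comm_t],
    fun a => by simp [Function.comp, g.comm_inv, f.comm_inv]⟩

@[simp] theorem UGraph.comp_f0 {X Y Z : UGraph} (f : X ⟶ Y) (g : Y ⟶ Z) :
    (f ≫ g).f0 = g.f0 ∘ f.f0 := rfl

@[simp] theorem UGraph.comp_f1 {X Y Z : UGraph} (f : X ⟶ Y) (g : Y ⟶ Z) :
    (f ≫ g).f1 = g.f1 ∘ f.f1 := rfl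

/-- two nodes are adjacent if some half-arc goes from one to the other. -/
def UGraph.adj (X : UGraph) (x y : X.nodes) : Prop :=
  ∃ u : X.half, X.s u = x ∧ X.t u = y

/-- An undirected graph is connected if any two nodes are joined by a finite
sequence of consecutively incident half-arcs. -/
def UGraph.Connected (X : UGraph) : Prop :=
  ∀ x y : X.nodes, Relation.ReflTransGen X.adj x y

/-- The undirected `p`-cycle `c^p_U` : nodes `ℤ/pℤ`, half-arcs `[n]⁺ = (n, true)`
and `[n]⁻ = (n, false)` with `s [n]⁺ = [n]`, `t [n]⁺ = [n+1]`, `i [n]⁺ = [n]⁻`. -/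
def cycleU (p : ℕ) : UGraph where
  nodes := ZMod p
  half := ZMod p × Bool
  s a := if a.2 then a.1 else a.1 + 1
  t a := if a.2 then a.1 + 1 else a.1
  inv a := (a.1, !a.2)
  inv_inv a := by simp
  s_inv a := by rcases a with ⟨n, _ | _⟩ <;> simp

/-- A `p`-cycle `h : c^p_U ⟶ X` is backtrack-free if `h₁([n+1]⁺) ≠ h₁([n]⁻)` for
all `n`. -/
def BFree {p : ℕ} {X : UGraph} (h : cycleU p ⟶ X) : Prop :=
  ∀ n : ZMod p, h.f1 (n + 1, true) ≠ h.f1 (n, false)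

/-- A morphism of undirected graphs is a covering if it restricts to a bijection on
the half-arcs issued from each node. -/
def IsCovering {X Y : UGraph} (f : X ⟶ Y) : Prop :=
  ∀ x : X.nodes,
    Function.Bijective (fun u : {u : X.half // X.s u = x} =>
      (⟨f.f1 u.1, by rw [f.comm_s, u.2]⟩ : {v : Y.half // Y.s v = f.f0 x}))

end Paper

namespace Paper

/-- `U` is a `p`-cycle with an attached forest via `c : c^p_U ⟶ U` : `U` is
connected, `c` is injective on nodes and on half-arcs, and every backtrack-free
cycle of `U` (of any length) has image contained in the image of `c`. -/
def CycleForest (p : ℕ) {U : UGraph} (c : cycleU p ⟶ U) : Prop :=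
  U.Connected ∧ Function.Injective c.f0 ∧ Function.Injective c.f1 ∧
    ∀ q : ℕ, 1 ≤ q → ∀ d : cycleU q ⟶ U, BFree d →
      (∀ n : ZMod q, ∃ m : ZMod p, d.f0 n = c.f0 m) ∧
        (∀ a : ZMod q × Bool, ∃ b : ZMod p × Bool, d.f1 a = c.f1 b)

/-!
A backtrack-free cycle `h` of `Y` is the same thing as an immersion `c^p_U ⟶ Y`, that is, a morphism
injective on the half-arcs issued from each node. Any immersion `h : C ⟶ Y` extends to a covering
of `Y` by attaching a forest to `C`: its vertices are the reduced walks of `Y` that start at some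
`h x` with a half-arc not lifting to `x`, and the parent of a walk is obtained by deleting
its last half-arc. Composing with `f` gives the covering of `X`.

A backtrack-free cycle in a graph with an attached forest cannot climb into the forest: at a node of
maximal positive height, both half-arcs of the cycle issued from it would be the one leading to the
parent, so the cycle would backtrack there.
-/

/-- A morphism is an immersion if it is injective on the half-arcs issued from each node. -/
def IsImmersion {X Y : UGraph} (f : X ⟶ Y) : Prop :=
  ∀ ⦃a b : X.half⦄, X.s a = X.s b → f.f1 a = f.f1 b → a = b

theorem IsImmersion.isCovering {X Y : UGraph} {f : X ⟶ Y} (hf : IsImmersion f)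
    (hlift : ∀ x v, Y.s v = f.f0 x → ∃ a, X.s a = x ∧ f.f1 a = v) : IsCovering f := by
  refine fun x => ⟨?_, ?_⟩
  · rintro ⟨a, ha⟩ ⟨b, hb⟩ hab
    exact Subtype.ext (hf (ha.trans hb.symm) (congrArg Subtype.val hab))
  · rintro ⟨v, hv⟩
    obtain ⟨a, ha, hav⟩ := hlift x v hv
    exact ⟨⟨a, ha⟩, Subtype.ext hav⟩

theorem IsCovering.comp {X Y Z : UGraph} {f : X ⟶ Y} {g : Y ⟶ Z} (hf : IsCovering f)
    (hg : IsCovering g) : IsCovering (f ≫ g) :=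
  fun x => (hg (f.f0 x)).comp (hf x)

theorem isImmersion_iff_bFree {p : ℕ} {Y : UGraph} {h : cycleU p ⟶ Y} :
    IsImmersion h ↔ BFree h := by
  constructor
  · intro hh n heq
    have : (n + 1, true) = (n, false) := hh rfl heq
    simp at this
  · rintro hbf ⟨n, b⟩ ⟨m, b'⟩ hs heq
    cases b <;> cases b'
    · rw [add_right_cancel (show n + 1 = m + 1 from hs)]
    · obtain rfl : n + 1 = m := hs
      exact absurd heq.symm (hbf n)
    · obtain rfl : n = m + 1 := hs
      exact absurd heq (hbf m)
    · rw [show n = m from hs]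

namespace UGraph

theorem t_inv (X : UGraph) (a : X.half) : X.t (X.inv a) = X.s a := by
  rw [← X.s_inv, X.inv_inv]

theorem adj.symm {X : UGraph} {x y : X.nodes} (hxy : X.adj x y) : X.adj y x := by
  obtain ⟨a, rfl, rfl⟩ := hxy
  exact ⟨X.inv a, X.s_inv a, X.t_inv a⟩

instance (X : UGraph) : Std.Symm X.adj where
  symm _ _ := adj.symm

theorem Hom.map_adj {X Y : UGraph} (f : X ⟶ Y) {x y : X.nodes} (hxy : X.adj x y) :
    Y.adj (f.f0 x) (f.f0 y) := by
  obtain ⟨a, rfl, rfl⟩ := hxy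
  exact ⟨f.f1 a, f.comm_s a, f.comm_t a⟩

theorem connected_of_forall_reachable {X : UGraph} (x₀ : X.nodes)
    (hx₀ : ∀ x, Relation.ReflTransGen X.adj x₀ x) : X.Connected :=
  fun x y => (symm (hx₀ x)).trans (hx₀ y)

end UGraph

theorem cycleU_adj_add_one (p : ℕ) (n : ZMod p) : (cycleU p).adj n (n + 1) :=
  ⟨(n, true), rfl, rfl⟩

theorem cycleU_connected (p : ℕ) : (cycleU p).Connected := by
  refine UGraph.connected_of_forall_reachable (0 : ZMod p) fun n => ?_
  obtain ⟨k, rfl⟩ := ZMod.intCast_surjective (n := p) n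
  induction k with
  | zero =>
    rw [Int.cast_zero]
    exact .refl
  | succ i ih =>
    rw [Int.cast_add, Int.cast_one]
    exact ih.tail (cycleU_adj_add_one p _)
  | pred i ih =>
    have hcast : ((-(i : ℤ) : ℤ) : ZMod p) = ((-(i : ℤ) - 1 : ℤ) : ZMod p) + 1 := by
      push_cast
      ring
    rw [hcast] at ih
    exact ih.tail (cycleU_adj_add_one p _).symm

/-- A rooted forest to be attached to a set `B` of base points: the parent of each vertex is a
base point or another vertex. The height strictly increases from parent to child, base points
having height `0`, so that every vertex descends from a base point. -/
structure Forest (B : Type) where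
  vertex : Type
  parent : vertex → B ⊕ vertex
  height : vertex → ℕ
  height_parent_lt : ∀ v, Sum.elim (fun _ => 0) height (parent v) < height v

namespace UGraph

variable {C : UGraph} {F : Forest C.nodes}

/-- The graph obtained from `C` by attaching the forest `F`. The half-arc `(v, true)` goes from the
vertex `v` of `F` to its parent, and `(v, false)` is the reversed half-arc. -/
def attach (C : UGraph) (F : Forest C.nodes) : UGraph where
  nodes := C.nodes ⊕ F.vertex
  half := C.half ⊕ F.vertex × Bool
  s := Sum.elim (fun a => .inl (C.s a)) fun a => if a.2 then .inr a.1 else F.parent a.1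
  t := Sum.elim (fun a => .inl (C.t a)) fun a => if a.2 then F.parent a.1 else .inr a.1
  inv := Sum.map C.inv fun a => (a.1, !a.2)
  inv_inv := by rintro (a | ⟨v, _ | _⟩) <;> simp [C.inv_inv]
  s_inv := by rintro (a | ⟨v, _ | _⟩) <;> simp [C.s_inv]

/-- The inclusion of `C` into the graph obtained by attaching a forest to it. -/
def toAttach (C : UGraph) (F : Forest C.nodes) : C ⟶ C.attach F where
  f0 := Sum.inl
  f1 := Sum.inl
  comm_s _ := rfl
  comm_t _ := rfl
  comm_inv _ := rfl

theorem attach_adj_parent (v : F.vertex) : (C.attach F).adj (F.parent v) (.inr v) :=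
  ⟨.inr (v, false), rfl, rfl⟩

/-- The height of a node above `C`. -/
def attachHeight (x : (C.attach F).nodes) : ℕ :=
  Sum.elim (fun _ => 0) F.height x

theorem exists_reachable_from_base (x : (C.attach F).nodes) :
    ∃ b : C.nodes, Relation.ReflTransGen (C.attach F).adj (.inl b) x := by
  induction hk : attachHeight x using Nat.strong_induction_on generalizing x with
  | _ k ih =>
    rcases x with b | v
    · exact ⟨b, .refl⟩
    · obtain ⟨b, hb⟩ := ih _ (hk ▸ F.height_parent_lt v) (F.parent v) rfl
      exact ⟨b, hb.tail (attach_adj_parent v)⟩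

theorem Connected.attach (hC : C.Connected) : (C.attach F).Connected := by
  intro x y
  obtain ⟨b, hbx⟩ := exists_reachable_from_base x
  obtain ⟨b', hby⟩ := exists_reachable_from_base y
  have hbb' : Relation.ReflTransGen (C.attach F).adj (.inl b) (.inl b') :=
    (hC b b').lift Sum.inl fun _ _ => (C.toAttach F).map_adj
  exact (symm hbx).trans (hbb'.trans hby)

theorem eq_toParent_of_attachHeight_le {v : F.vertex} {a : (C.attach F).half}
    (hs : (C.attach F).s a = .inr v)
    (ht : attachHeight ((C.attach F).t a) ≤ F.height v) : a = .inr (v, true) := by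
  rcases a with e | ⟨w, _ | _⟩
  · cases hs
  · have hlt := F.height_parent_lt w
    rw [show F.parent w = .inr v from hs] at hlt
    exact absurd ht hlt.not_ge
  · cases hs
    rfl

end UGraph

section Attach

variable {C : UGraph} {F : Forest C.nodes} {q : ℕ} [NeZero q] {d : cycleU q ⟶ C.attach F}

theorem BFree.attachHeight_eq_zero (hd : BFree d) (n : ZMod q) :
    UGraph.attachHeight (d.f0 n) = 0 := by
  obtain ⟨m, hmax⟩ := Finite.exists_max fun k : ZMod q => UGraph.attachHeight (d.f0 k)
  obtain ⟨r, rfl⟩ : ∃ r, r + 1 = m := ⟨m - 1, sub_add_cancel m 1⟩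
  refine Nat.le_zero.mp ((hmax n).trans ?_)
  rcases hr : d.f0 (r + 1) with b | v
  · exact (congrArg UGraph.attachHeight hr).le
  have toParent {a : (cycleU q).half} (hs : (cycleU q).s a = r + 1) : d.f1 a = .inr (v, true) := by
    refine UGraph.eq_toParent_of_attachHeight_le ((d.comm_s a).trans (hs ▸ hr)) ?_
    calc UGraph.attachHeight ((C.attach F).t (d.f1 a))
        = UGraph.attachHeight (d.f0 ((cycleU q).t a)) := by rw [d.comm_t]
      _ ≤ UGraph.attachHeight (d.f0 (r + 1)) := hmax _
      _ = F.height v := congrArg UGraph.attachHeight hr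
  exact absurd ((toParent (a := (r + 1, true)) rfl).trans (toParent (a := (r, false)) rfl).symm)
    (hd r)

theorem BFree.f0_mem_range_toAttach (hd : BFree d) (n : ZMod q) :
    d.f0 n ∈ Set.range (C.toAttach F).f0 := by
  have hzero := hd.attachHeight_eq_zero n
  rcases hn : d.f0 n with b | v
  · exact ⟨b, rfl⟩
  · rw [hn] at hzero
    exact absurd hzero ((Nat.zero_le _).trans_lt (F.height_parent_lt v)).ne'

theorem BFree.f1_mem_range_toAttach (hd : BFree d) (a : (cycleU q).half) :
    d.f1 a ∈ Set.range (C.toAttach F).f1 := by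
  obtain ⟨x, hx⟩ := hd.f0_mem_range_toAttach ((cycleU q).s a)
  obtain ⟨y, hy⟩ := hd.f0_mem_range_toAttach ((cycleU q).t a)
  rw [← d.comm_s] at hx
  rw [← d.comm_t] at hy
  rcases ha : d.f1 a with e | ⟨v, _ | _⟩
  · exact ⟨e, rfl⟩
  · rw [ha] at hy
    cases hy
  · rw [ha] at hx
    cases hx

end Attach

theorem cycleForest_toAttach {p : ℕ} (F : Forest (cycleU p).nodes) :
    CycleForest p ((cycleU p).toAttach F) := by
  refine ⟨(cycleU_connected p).attach, Sum.inl_injective, Sum.inl_injective, ?_⟩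
  intro q hq d hd
  have : NeZero q := ⟨Nat.one_le_iff_ne_zero.mp hq⟩
  refine ⟨fun n => ?_, fun a => ?_⟩
  · obtain ⟨m, hm⟩ := hd.f0_mem_range_toAttach n
    exact ⟨m, hm.symm⟩
  · obtain ⟨b, hb⟩ := hd.f1_mem_range_toAttach a
    exact ⟨b, hb.symm⟩

section Branches

variable {C Y : UGraph}

/-- The nonempty reduced walks of `Y` that start at some `h x` with a half-arc not lifting to a
half-arc of `C` issued from `x`, indexed by their last half-arc. They are the vertices to be
attached to `C` to turn the immersion `h` into a covering. -/
inductive Branch (h : C ⟶ Y) : Y.half → Type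
  | sprout (x : C.nodes) (a : Y.half) (hs : Y.s a = h.f0 x)
      (hlift : ∀ e, C.s e = x → h.f1 e ≠ a) : Branch h a
  | extend {b : Y.half} (β : Branch h b) (a : Y.half) (hs : Y.s a = Y.t b)
      (hne : a ≠ Y.inv b) : Branch h a

namespace Branch

variable {h : C ⟶ Y}

/-- The number of half-arcs of a branch. -/
def length {a : Y.half} : Branch h a → ℕ
  | sprout .. => 1
  | extend β .. => β.length + 1

/-- The branch with its last half-arc deleted, or the node of `C` it starts from if nothing is
left. -/
def parent {a : Y.half} : Branch h a → C.nodes ⊕ Σ b, Branch h b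
  | sprout x .. => .inl x
  | extend β .. => .inr ⟨_, β⟩

theorem length_parent_lt {a : Y.half} (β : Branch h a) :
    Sum.elim (fun _ => 0) (fun γ : Σ b, Branch h b => γ.2.length) β.parent < β.length := by
  cases β with
  | sprout => exact Nat.one_pos
  | extend => exact Nat.lt_succ_self _

theorem s_eq_endpoint_parent {a : Y.half} (β : Branch h a) :
    Y.s a = Sum.elim h.f0 (fun γ : Σ b, Branch h b => Y.t γ.1) β.parent := by
  cases β <;> assumption

theorem parent_injective (a : Y.half) :
    Function.Injective (parent : Branch h a → C.nodes ⊕ Σ b, Branch h b) := by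
  rintro (_ | _) (_ | _) hβ <;> cases hβ <;> rfl

theorem f1_ne_of_parent_eq_inl {a : Y.half} {β : Branch h a} {x : C.nodes}
    (hβ : β.parent = .inl x) {e : C.half} (he : C.s e = x) : h.f1 e ≠ a := by
  cases β with
  | sprout _ _ _ hlift =>
    cases hβ
    exact hlift e he
  | extend => cases hβ

theorem ne_inv_of_parent_eq_inr {a : Y.half} {β : Branch h a} {γ : Σ b, Branch h b}
    (hβ : β.parent = .inr γ) : a ≠ Y.inv γ.1 := by
  cases β with
  | sprout => cases hβ
  | extend _ _ _ hne =>
    cases hβ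
    exact hne

end Branch

/-- The forest of all branches of `h`. -/
def branchForest (h : C ⟶ Y) : Forest C.nodes where
  vertex := Σ a, Branch h a
  parent β := β.2.parent
  height β := β.2.length
  height_parent_lt β := β.2.length_parent_lt

/-- The extension of `h` to the graph with all branches attached, sending a branch to its endpoint
and the half-arc from its parent to its last half-arc. -/
def branchExtension (h : C ⟶ Y) : C.attach (branchForest h) ⟶ Y where
  f0 := Sum.elim h.f0 fun β => Y.t β.1
  f1 := Sum.elim h.f1 fun a => if a.2 then Y.inv a.1.1 else a.1.1
  comm_s := by
    rintro (e | ⟨β, _ | _⟩)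
    · exact h.comm_s e
    · exact β.2.s_eq_endpoint_parent
    · exact Y.s_inv β.1
  comm_t := by
    rintro (e | ⟨β, _ | _⟩)
    · exact h.comm_t e
    · rfl
    · exact (Y.t_inv β.1).trans β.2.s_eq_endpoint_parent
  comm_inv := by
    rintro (e | ⟨β, _ | _⟩)
    · exact h.comm_inv e
    · rfl
    · exact Y.inv_inv β.1

variable {h : C ⟶ Y}

theorem IsImmersion.isImmersion_branchExtension (hh : IsImmersion h) :
    IsImmersion (branchExtension h) := by
  rintro (e | ⟨⟨a, β⟩, _ | _⟩) (e' | ⟨⟨a', β'⟩, _ | _⟩) hs heq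
  · exact congrArg Sum.inl (hh (Sum.inl_injective hs) heq)
  · exact absurd heq (Branch.f1_ne_of_parent_eq_inl hs.symm rfl)
  · cases hs
  · exact absurd heq.symm (Branch.f1_ne_of_parent_eq_inl hs rfl)
  · obtain rfl : a = a' := heq
    obtain rfl : β = β' := Branch.parent_injective a hs
    rfl
  · exact absurd heq (Branch.ne_inv_of_parent_eq_inr hs)
  · cases hs
  · exact absurd heq.symm (Branch.ne_inv_of_parent_eq_inr hs.symm)
  · cases hs
    rfl

theorem exists_lift_branchExtension (x : (C.attach (branchForest h)).nodes) (v : Y.half)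
    (hv : Y.s v = (branchExtension h).f0 x) :
    ∃ a, (C.attach (branchForest h)).s a = x ∧ (branchExtension h).f1 a = v := by
  rcases x with x | ⟨b, β⟩
  · by_cases hlift : ∃ e, C.s e = x ∧ h.f1 e = v
    · obtain ⟨e, rfl, rfl⟩ := hlift
      exact ⟨.inl e, rfl, rfl⟩
    · exact ⟨.inr (⟨v, .sprout x v hv fun e he hev => hlift ⟨e, he, hev⟩⟩, false), rfl, rfl⟩
  · by_cases hback : v = Y.inv b
    · exact ⟨.inr (⟨b, β⟩, true), rfl, hback.symm⟩
    · exact ⟨.inr (⟨v, .extend β v hv hback⟩, false), rfl, rfl⟩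

theorem IsImmersion.isCovering_branchExtension (hh : IsImmersion h) :
    IsCovering (branchExtension h) :=
  hh.isImmersion_branchExtension.isCovering exists_lift_branchExtension

end Branches

-- For `p = 0` the graph `cycleU p` is the two-way infinite line, since `ZMod 0 = ℤ`.
theorem stmt_11_general {X Y : UGraph} (f : Y ⟶ X) (hf : IsCovering f) (p : ℕ)
    (h : cycleU p ⟶ Y) (hbf : BFree h) :
    ∃ (U : UGraph) (g : U ⟶ X) (u : U ⟶ Y) (c : cycleU p ⟶ U),
      IsCovering g ∧ u ≫ f = g ∧ CycleForest p c ∧ c ≫ u = h := by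
  have hcov : IsCovering (branchExtension h) :=
    (isImmersion_iff_bFree.mpr hbf).isCovering_branchExtension
  exact ⟨_, branchExtension h ≫ f, branchExtension h, (cycleU p).toAttach (branchForest h),
    hcov.comp hf, rfl, cycleForest_toAttach _, rfl⟩

/-- if `f : Y ⟶ X` is a covering and `Y` has no loops, then every
backtrack-free `p`-cycle of `Y` (`p > 1`) extends to a covering `g : U ⟶ X` of `X`
by a `p`-cycle with an attached forest, together with a morphism `u : U ⟶ Y` over `X`
whose restriction to the `p`-cycle is the given cycle. -/
theorem stmt_11 {X Y : UGraph} (f : Y ⟶ X) (hf : IsCovering f)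
    (hnoloop : ∀ u : Y.half, Y.s u ≠ Y.t u)
    (p : ℕ) (hp : 1 < p) (h : cycleU p ⟶ Y) (hbf : BFree h) :
    ∃ (U : UGraph) (g : U ⟶ X) (u : U ⟶ Y) (c : cycleU p ⟶ U),
      IsCovering g ∧ u ≫ f = g ∧ CycleForest p c ∧ c ≫ u = h := by
  exact stmt_11_general f hf p h hbf

end Paper
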